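/- Let s be a positive integer, let A be a set of n positive integers with total sum N, let 1 ≤ k < n, and let B_0 < B_1 < ... < B_m be a strictly increasing chain of k-element subsets of A (in the order where B ≤ C iff the i-th smallest element of B is at most the i-th smallest element of C for every i) such that each B_j is an s-divisor of A. Then every element a ∈ B_0 satisfies a·(s+m) < s·N. -/

import Mathlib

/-! The sums along the chain strictly increase and all divide `s * N`, where `N` is the sum of `A`.
Since the top set is a proper subset of `A`, its sum is less than `N`, so its cofactor in `s * N`
exceeds `s`. Each of the `m` steps down the chain raises the integer cofactor by at least one, so
that of `B₀` exceeds `s + m`; and any `a ∈ B₀` is at most the sum of `B₀`. -/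

/-- The `i`-th smallest element of a finset of naturals (0-indexed; junk value `0` if
`i` is out of range). -/
def kthSmallest (B : Finset ℕ) (i : ℕ) : ℕ :=
  (B.sort (· ≤ ·)).getD i 0

/-- The partial order on `k`-element subsets: `B ≤ C` iff for each `i < k`, the `i`-th
smallest element of `B` is at most the `i`-th smallest element of `C`. -/
def SubsetLE (k : ℕ) (B C : Finset ℕ) : Prop :=
  ∀ i < k, kthSmallest B i ≤ kthSmallest C i

theorem kthSmallest_eq_getElem {B : Finset ℕ} {i : ℕ} (hi : i < (B.sort (· ≤ ·)).length) :
    kthSmallest B i = (B.sort (· ≤ ·))[i] :=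
  List.getD_eq_getElem _ _ hi

theorem sum_kthSmallest (B : Finset ℕ) : ∑ i ∈ Finset.range B.card, kthSmallest B i = B.sum id :=
  calc ∑ i ∈ Finset.range B.card, kthSmallest B i
      = ∑ i : Fin (B.sort (· ≤ ·)).length, (B.sort (· ≤ ·))[i.1] := by
        rw [← Finset.length_sort (· ≤ ·), Finset.sum_range]
        exact Finset.sum_congr rfl fun i _ => kthSmallest_eq_getElem i.2
    _ = (B.sort (· ≤ ·)).sum := Fin.sum_univ_getElem _
    _ = B.sum id := by
        rw [← Multiset.sum_coe, Finset.sort_eq, Finset.sum_eq_multiset_sum, Multiset.map_id]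

namespace SubsetLE

variable {k : ℕ} {B C : Finset ℕ}

theorem antisymm (hB : B.card = k) (hC : C.card = k) (hBC : SubsetLE k B C)
    (hCB : SubsetLE k C B) : B = C := by
  have sort_eq : B.sort (· ≤ ·) = C.sort (· ≤ ·) := by
    refine List.ext_getElem (by simp [hB, hC]) fun i hiB hiC => ?_
    have hi : i < k := by simpa [hB] using hiB
    rw [← kthSmallest_eq_getElem hiB, ← kthSmallest_eq_getElem hiC]
    exact le_antisymm (hBC i hi) (hCB i hi)
  rw [← Finset.sort_toFinset B (· ≤ ·), sort_eq, Finset.sort_toFinset]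

theorem sum_lt_sum (hB : B.card = k) (hC : C.card = k) (h : SubsetLE k B C) (hne : B ≠ C) :
    B.sum id < C.sum id := by
  obtain ⟨i, hi, hlt⟩ : ∃ i < k, kthSmallest B i < kthSmallest C i := by
    by_contra! hCB
    exact hne (antisymm hB hC h hCB)
  rw [← sum_kthSmallest B, ← sum_kthSmallest C, hB, hC]
  exact Finset.sum_lt_sum (fun j hj => h j (Finset.mem_range.1 hj)) ⟨i, Finset.mem_range.2 hi, hlt⟩

end SubsetLE

theorem succ_mul_lt_of_lt_of_dvd {b c s M : ℕ} (hbc : b < c) (hb : b ∣ M) (hc : c ∣ M)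
    (h : s * c < M) : (s + 1) * b < M := by
  have hM : M ≠ 0 := Nat.ne_zero_of_lt h
  have lt_div_c : s < M / c := (Nat.lt_div_iff_mul_lt_of_dvd (ne_zero_of_dvd_ne_zero hM hc) hc).2 h
  have div_lt_div : M / c < M / b := (Nat.div_lt_div_left hM hc hb).2 hbc
  exact (Nat.lt_div_iff_mul_lt_of_dvd (ne_zero_of_dvd_ne_zero hM hb) hb).1
    ((Nat.succ_le_of_lt lt_div_c).trans_lt div_lt_div)

theorem add_mul_lt_of_strictMono_of_dvd {m s M : ℕ} {f : Fin (m + 1) → ℕ} (hf : StrictMono f)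
    (hdvd : ∀ j, f j ∣ M) (hlast : s * f (Fin.last m) < M) : (s + m) * f 0 < M := by
  induction m with
  | zero => exact hlast
  | succ m ih =>
    have tail : (s + m) * f (Fin.succ 0) < M :=
      ih (hf.comp Fin.strictMono_succ) (fun j => hdvd j.succ) hlast
    exact succ_mul_lt_of_lt_of_dvd (hf (Fin.succ_pos 0)) (hdvd _) (hdvd _) tail

theorem sum_lt_sum_of_ssubset_of_pos {ι M : Type*} [AddCommMonoid M] [PartialOrder M]
    [IsOrderedCancelAddMonoid M] {f : ι → M} {s t : Finset ι} (hf : ∀ i ∈ t, 0 < f i)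
    (h : s ⊂ t) : ∑ i ∈ s, f i < ∑ i ∈ t, f i := by
  obtain ⟨i, hit, his⟩ := Finset.exists_of_ssubset h
  exact Finset.sum_lt_sum_of_subset h.subset hit his (hf i hit) fun j hj _ => (hf j hj).le

/-- **Remark 6.** If `B₀ < B₁ < ⋯ < B_m` is a strictly increasing chain of `k`-element
subsets of `A` (with `1 ≤ k < n = |A|`), each an `s`-divisor of `A`, then every
`a ∈ B₀` satisfies `a · (s + m) < s · ∑ A`. -/
theorem chain_gives_small_elements (s n k m : ℕ) (hs : 0 < s)
    (A : Finset ℕ) (hApos : ∀ a ∈ A, 0 < a) (hcard : A.card = n)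
    (hk1 : 1 ≤ k) (hkn : k < n)
    (B : Fin (m + 1) → Finset ℕ)
    (hBsub : ∀ j, B j ⊆ A) (hBcard : ∀ j, (B j).card = k)
    (hchain : ∀ j : Fin m,
      SubsetLE k (B j.castSucc) (B j.succ) ∧ B j.castSucc ≠ B j.succ)
    (hdiv : ∀ j, (B j).sum id ∣ s * A.sum id) :
    ∀ a ∈ B 0, a * (s + m) < s * A.sum id := by
  have sum_strictMono : StrictMono fun j => (B j).sum id :=
    Fin.strictMono_iff_lt_succ.2 fun j =>
      (hchain j).1.sum_lt_sum (hBcard _) (hBcard _) (hchain j).2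
  have last_ssubset : B (Fin.last m) ⊂ A :=
    (hBsub _).ssubset_of_ne fun h => hkn.ne (by rw [← hBcard (Fin.last m), h, hcard])
  have sum_last_lt : s * (B (Fin.last m)).sum id < s * A.sum id :=
    Nat.mul_lt_mul_of_pos_left (sum_lt_sum_of_ssubset_of_pos hApos last_ssubset) hs
  intro a ha
  calc a * (s + m) = (s + m) * a := Nat.mul_comm _ _
    _ ≤ (s + m) * (B 0).sum id :=
        Nat.mul_le_mul_left _ (Finset.single_le_sum (f := id) (fun _ _ => Nat.zero_le _) ha)
    _ < s * A.sum id := add_mul_lt_of_strictMono_of_dvd sum_strictMono hdiv sum_last_lt
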